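/- arXiv:2002.02863 — 2 statements merged into one kernel-verified Lean document; each statement's English description precedes it below -/
import Mathlib

section
/- Let n be a positive natural number, let P and P′ be n×n real matrices, and let ρ and ρ′ be vectors in ℝⁿ (regarded as row vectors) satisfying the stationarity conditions ρᵀP = ρᵀ and ρ′ᵀP′ = ρ′ᵀ, together with the normalizations ∑_i ρ_i = 1 and ∑_i ρ′_i = 1. Let E = P′ − P, let 𝟙 denote the all-ones column vector in ℝⁿ, and suppose the matrix I − P + 𝟙ρᵀ is invertible with inverse Z. Then ρ′ᵀ − ρᵀ = ρ′ᵀ E Z. -/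
/-!
Stationarity gives `(ρ' - ρ)(I - P) = ρ' - ρ' P = ρ' (P' - P)`. Since `ρ` and `ρ'` have the same
total mass, `ρ' - ρ` annihilates the rank-one term `𝟙 ρᵀ`, so `I - P` may be replaced by the
invertible matrix `I - P + 𝟙 ρᵀ`; the same works for any `w uᵀ` with `ρᵀ w = ρ'ᵀ w`.
-/

section StationaryPerturbation

open Matrix

variable {ι R : Type*} [Fintype ι] [DecidableEq ι] {ρ ρ' : ι → R} {P P' : Matrix ι ι R}

theorem sub_vecMul_one_sub_of_stationary [NonAssocRing R]
    (hρ : ρ ᵥ* P = ρ) (hρ' : ρ' ᵥ* P' = ρ') :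
    (ρ' - ρ) ᵥ* (1 - P) = ρ' ᵥ* (P' - P) := by
  have hρ_zero : ρ ᵥ* (1 - P) = 0 := by rw [vecMul_sub, vecMul_one, hρ, sub_self]
  rw [sub_vecMul, hρ_zero, sub_zero, vecMul_sub, vecMul_sub, vecMul_one, hρ']

theorem stmt_5_general [Ring R] {u w : ι → R} {Z : Matrix ι ι R}
    (hρ : ρ ᵥ* P = ρ) (hρ' : ρ' ᵥ* P' = ρ') (hw : ρ ⬝ᵥ w = ρ' ⬝ᵥ w)
    (hZ : (1 - P + vecMulVec w u) * Z = 1) :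
    ρ' - ρ = ρ' ᵥ* (P' - P) ᵥ* Z := by
  have hw_sub : (ρ' - ρ) ⬝ᵥ w = 0 := by rw [sub_dotProduct, hw, sub_self]
  calc
    ρ' - ρ = (ρ' - ρ) ᵥ* (1 - P + vecMulVec w u) ᵥ* Z := by
      rw [vecMul_vecMul, hZ, vecMul_one]
    _ = (ρ' - ρ) ᵥ* (1 - P) ᵥ* Z := by
      rw [vecMul_add, vecMul_vecMulVec, hw_sub, zero_smul, add_zero]
    _ = ρ' ᵥ* (P' - P) ᵥ* Z := by
      rw [sub_vecMul_one_sub_of_stationary hρ hρ']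

end StationaryPerturbation

/-- Stationary-distribution perturbation identity (Schweitzer): if `ρᵀP = ρᵀ`, `ρ′ᵀP′ = ρ′ᵀ`,
both normalized to sum 1, `E = P′ − P`, and `Z` is the inverse of the fundamental matrix
`I − P + 𝟙ρᵀ`, then `ρ′ᵀ − ρᵀ = ρ′ᵀ E Z`. -/
theorem stmt_5 (n : ℕ) (hn : 0 < n) (P P' : Matrix (Fin n) (Fin n) ℝ)
    (ρ ρ' : Fin n → ℝ)
    (hρ : Matrix.vecMul ρ P = ρ) (hρ' : Matrix.vecMul ρ' P' = ρ')
    (hρsum : ∑ i, ρ i = 1) (hρ'sum : ∑ i, ρ' i = 1)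
    (Z : Matrix (Fin n) (Fin n) ℝ)
    (hZ : (1 - P + Matrix.of fun _ j => ρ j) * Z = 1)
    (hZ' : Z * (1 - P + Matrix.of fun _ j => ρ j) = 1) :
    (fun i => ρ' i - ρ i) = Matrix.vecMul (Matrix.vecMul ρ' (P' - P)) Z :=
  stmt_5_general (u := ρ) (w := 1) hρ hρ' (by simp only [dotProduct_one, hρsum, hρ'sum])
    (by simpa only [Matrix.vecMulVec, Pi.one_apply, one_mul] using hZ)
end

section
/- Let n be a positive natural number, let P and P′ be n×n real matrices, and let ρ and ρ′ be vectors in ℝⁿ (regarded as row vectors) satisfying the stationarity conditions ρᵀP = ρᵀ and ρ′ᵀP′ = ρ′ᵀ, together with the normalizations ∑_i ρ_i = 1 and ∑_i ρ′_i = 1, and assume additionally that every entry of ρ′ is nonnegative. Let E = P′ − P, let 𝟙 denote the all-ones column vector in ℝⁿ, and suppose the matrix I − P + 𝟙ρᵀ is invertible with inverse Z. Then ‖ρ − ρ′‖₂ ≤ ‖E‖ · ‖Z‖, where ‖·‖₂ is the Euclidean norm on ℝⁿ and ‖·‖ denotes the ℓ²→ℓ² operator norm on n×n matrices. -/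
/-!
Put `d = ρ' - ρ`. The entries of `d` sum to zero, so `dᵀ𝟙wᵀ = 0` for every vector `w`, and the two
stationarity equations give `dᵀ(I - P + 𝟙wᵀ) = ρ'ᵀ(P' - P)`. A right inverse `Z` of
`I - P + 𝟙wᵀ` therefore yields `dᵀ = ρ'ᵀ(P' - P)Z`. The operator norm is the same for row and
column vectors, and a probability vector has Euclidean norm at most its `ℓ¹` norm, which is `1`.
-/

section Algebra

open Matrix

theorem vecMul_replicateRow {m n R : Type*} [Fintype m] [NonUnitalNonAssocSemiring R] (v : m → R)
    (w : n → R) : v ᵥ* replicateRow m w = (∑ i, v i) • w := by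
  ext j
  simp only [vecMul, dotProduct, replicateRow_apply, Finset.sum_mul, Pi.smul_apply, smul_eq_mul]

variable {n R : Type*} [Fintype n] [DecidableEq n] [Ring R]
  {P P' Z : Matrix n n R} {ρ ρ' w : n → R}

theorem stationary_sub_vecMul (hρ : ρ ᵥ* P = ρ) (hρ' : ρ' ᵥ* P' = ρ')
    (hsum : ∑ i, ρ i = ∑ i, ρ' i) :
    (ρ' - ρ) ᵥ* (1 - P + replicateRow n w) = ρ' ᵥ* (P' - P) := by
  have sum_sub_eq_zero : ∑ i, (ρ' - ρ) i = 0 := by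
    simp only [Pi.sub_apply, Finset.sum_sub_distrib, hsum, sub_self]
  calc (ρ' - ρ) ᵥ* (1 - P + replicateRow n w)
      = (ρ' - ρ) - (ρ' - ρ) ᵥ* P := by
        rw [vecMul_add, vecMul_replicateRow, sum_sub_eq_zero, zero_smul, add_zero, vecMul_sub,
          vecMul_one]
    _ = ρ' - ρ' ᵥ* P := by rw [sub_vecMul, hρ, sub_sub_sub_cancel_right]
    _ = ρ' ᵥ* (P' - P) := by rw [vecMul_sub, hρ']

theorem stationary_sub_eq_vecMul (hρ : ρ ᵥ* P = ρ) (hρ' : ρ' ᵥ* P' = ρ')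
    (hsum : ∑ i, ρ i = ∑ i, ρ' i) (hZ : (1 - P + replicateRow n w) * Z = 1) :
    ρ' - ρ = ρ' ᵥ* ((P' - P) * Z) := by
  rw [← vecMul_vecMul, ← stationary_sub_vecMul (w := w) hρ hρ' hsum, vecMul_vecMul,
    hZ, vecMul_one]

end Algebra

section Norms

open Matrix
open scoped Matrix.Norms.L2Operator

theorem norm_toLp_star {ι 𝕜 : Type*} [Fintype ι] [RCLike 𝕜] (v : ι → 𝕜) :
    ‖WithLp.toLp 2 (star v)‖ = ‖WithLp.toLp 2 v‖ := by
  simp only [EuclideanSpace.norm_eq, Pi.star_apply, norm_star]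

theorem norm_toLp_vecMul_le {m n 𝕜 : Type*} [Fintype m] [Fintype n] [DecidableEq n] [RCLike 𝕜]
    (v : EuclideanSpace 𝕜 m) (A : Matrix m n 𝕜) :
    ‖WithLp.toLp 2 (v.ofLp ᵥ* A)‖ ≤ ‖A‖ * ‖v‖ := by
  classical
  calc ‖WithLp.toLp 2 (v.ofLp ᵥ* A)‖
      = ‖WithLp.toLp 2 (Aᴴ *ᵥ star v.ofLp)‖ := by rw [← star_vecMul, norm_toLp_star]
    _ ≤ ‖Aᴴ‖ * ‖WithLp.toLp 2 (star v.ofLp)‖ := l2_opNorm_mulVec Aᴴ (WithLp.toLp 2 (star v.ofLp))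
    _ = ‖A‖ * ‖v‖ := by rw [l2_opNorm_conjTranspose, norm_toLp_star]

theorem piLp_norm_le_sum_norm {p : ENNReal} [Fact (1 ≤ p)] {ι : Type*} [Fintype ι] {E : ι → Type*}
    [∀ i, SeminormedAddCommGroup (E i)] (x : PiLp p E) : ‖x‖ ≤ ∑ i, ‖x i‖ := by
  classical
  have sum_single : ∑ i, PiLp.single p i (x i) = x := by
    ext i
    simp
  calc ‖x‖ = ‖∑ i, PiLp.single p i (x i)‖ := by rw [sum_single]
    _ ≤ ∑ i, ‖PiLp.single p i (x i)‖ := norm_sum_le _ _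
    _ = ∑ i, ‖x i‖ := by simp only [PiLp.norm_single]

theorem piLp_norm_le_one_of_mem_stdSimplex {p : ENNReal} [Fact (1 ≤ p)] {ι : Type*} [Fintype ι]
    {x : PiLp p fun _ : ι ↦ ℝ} (hx : x.ofLp ∈ stdSimplex ℝ ι) : ‖x‖ ≤ 1 :=
  calc ‖x‖ ≤ ∑ i, ‖x i‖ := piLp_norm_le_sum_norm x
    _ = ∑ i, x i := Finset.sum_congr rfl fun i _ ↦ Real.norm_of_nonneg (hx.1 i)
    _ = 1 := hx.2

theorem stmt_6_general {ι 𝕜 : Type*} [Fintype ι] [DecidableEq ι] [RCLike 𝕜]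
    {P P' Z : Matrix ι ι 𝕜} {ρ ρ' : EuclideanSpace 𝕜 ι} {w : ι → 𝕜}
    (hρ : ρ.ofLp ᵥ* P = ρ) (hρ' : ρ'.ofLp ᵥ* P' = ρ') (hsum : ∑ i, ρ i = ∑ i, ρ' i)
    (hZ : (1 - P + replicateRow ι w) * Z = 1) :
    ‖ρ - ρ'‖ ≤ ‖toEuclideanCLM (𝕜 := 𝕜) (P' - P)‖ * ‖toEuclideanCLM (𝕜 := 𝕜) Z‖ * ‖ρ'‖ := by
  simp only [l2_opNorm_toEuclideanCLM]
  calc ‖ρ - ρ'‖ = ‖ρ' - ρ‖ := norm_sub_rev ρ ρ'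
    _ = ‖WithLp.toLp 2 (ρ'.ofLp ᵥ* ((P' - P) * Z))‖ := by
      rw [← stationary_sub_eq_vecMul hρ hρ' hsum hZ, WithLp.toLp_sub]
    _ ≤ ‖(P' - P) * Z‖ * ‖ρ'‖ := norm_toLp_vecMul_le ρ' _
    _ ≤ ‖P' - P‖ * ‖Z‖ * ‖ρ'‖ := by
      gcongr
      exact l2_opNorm_mul _ _

end Norms

/-- Approximate policy coverage bound (Theorem 4, norm form): under the stationarity,
normalization and nonnegativity assumptions, with `E = P′ − P` and `Z` the inverse of the
fundamental matrix `I − P + 𝟙ρᵀ`, the Euclidean distance between the stationary distributions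
is bounded by the product of the ℓ²→ℓ² operator norms of `E` and `Z`. -/
theorem stmt_6 (n : ℕ) (hn : 0 < n) (P P' : Matrix (Fin n) (Fin n) ℝ)
    (ρ ρ' : EuclideanSpace ℝ (Fin n))
    (hρ : Matrix.vecMul (ρ : Fin n → ℝ) P = ρ)
    (hρ' : Matrix.vecMul (ρ' : Fin n → ℝ) P' = ρ')
    (hρsum : ∑ i, ρ i = 1) (hρ'sum : ∑ i, ρ' i = 1)
    (hρ'nonneg : ∀ i, 0 ≤ ρ' i)
    (Z : Matrix (Fin n) (Fin n) ℝ)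
    (hZ : (1 - P + Matrix.of fun _ j => ρ j) * Z = 1)
    (hZ' : Z * (1 - P + Matrix.of fun _ j => ρ j) = 1) :
    ‖ρ - ρ'‖ ≤
      ‖Matrix.toEuclideanCLM (𝕜 := ℝ) (P' - P)‖ * ‖Matrix.toEuclideanCLM (𝕜 := ℝ) Z‖ :=
  (stmt_6_general hρ hρ' (hρsum.trans hρ'sum.symm) hZ).trans <|
    mul_le_of_le_one_right (by positivity) (piLp_norm_le_one_of_mem_stdSimplex ⟨hρ'nonneg, hρ'sum⟩)
end
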